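/- Let M ≥ 0, let ℓ ≥ 1 be an integer, and let φ ∈ C^ℓ(ℝ^N) satisfy |∂^β φ(x)| ≤ (1 + ‖x‖)^{−𝐍−M} for all multi-indices β with |β| ≤ ℓ and all x ∈ ℝ^N. Then there is a constant C > 0 such that for every multi-index β with |β| ≤ ℓ and every x in the regular set Ω = {x ∈ ℝ^N : ⟨x,α⟩ ≠ 0 for all α ∈ R}, |T^β φ(x)| ≤ C (1 + ‖x‖)^{−𝐍−M}, where T^β = T₁^{β₁} ∘ ⋯ ∘ T_N^{β_N} is the iterated Dunkl operator acting on smooth functions on the G-invariant open set Ω. -/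

import Mathlib

open MeasureTheory Metric
open scoped ENNReal RealInnerProductSpace BigOperators

noncomputable section

/-- The reflection `σ_α` in the hyperplane orthogonal to `α`. -/
def dunklReflect {N : ℕ} (α x : EuclideanSpace ℝ (Fin N)) : EuclideanSpace ℝ (Fin N) :=
  x - (2 * ⟪x, α⟫ / ‖α‖ ^ 2) • α

/-- The Dunkl weight measure `dw` with density `∏_{α ∈ R} |⟨x,α⟩|^{k α}`. -/
def dunklMeasure (N : ℕ) (R : Finset (EuclideanSpace ℝ (Fin N)))
    (k : EuclideanSpace ℝ (Fin N) → ℝ) : Measure (EuclideanSpace ℝ (Fin N)) :=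
  (volume : Measure (EuclideanSpace ℝ (Fin N))).withDensity fun x =>
    ENNReal.ofReal (∏ α ∈ R, |⟪x, α⟫| ^ (k α))

/-- The homogeneous dimension `𝐍 = N + Σ_{α ∈ R} k(α)`. -/
def homDim (N : ℕ) (R : Finset (EuclideanSpace ℝ (Fin N)))
    (k : EuclideanSpace ℝ (Fin N) → ℝ) : ℝ :=
  N + ∑ α ∈ R, k α

/-- The partial derivative in the `j`-th coordinate direction. -/
def pderivE {N : ℕ} (j : Fin N) (f : EuclideanSpace ℝ (Fin N) → ℂ) :
    EuclideanSpace ℝ (Fin N) → ℂ :=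
  fun x => fderiv ℝ f x (EuclideanSpace.single j 1)

/-- The iterated partial derivative `∂^β = ∂_1^{β 1} ∘ ⋯ ∘ ∂_N^{β N}`
for a multi-index `β`. -/
def mderivE {N : ℕ} (β : Fin N → ℕ) (f : EuclideanSpace ℝ (Fin N) → ℂ) :
    EuclideanSpace ℝ (Fin N) → ℂ :=
  (List.finRange N).foldr (fun j g => (pderivE j)^[β j] g) f

/-- The Dunkl operator `T_j`. -/
def dunklT (N : ℕ) (R : Finset (EuclideanSpace ℝ (Fin N)))
    (k : EuclideanSpace ℝ (Fin N) → ℝ) (j : Fin N)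
    (f : EuclideanSpace ℝ (Fin N) → ℂ) : EuclideanSpace ℝ (Fin N) → ℂ :=
  fun x => fderiv ℝ f x (EuclideanSpace.single j 1) +
    ∑ α ∈ R, ((k α / 2 * α j : ℝ) : ℂ) * ((f x - f (dunklReflect α x)) / ((⟪α, x⟫ : ℝ) : ℂ))

/-- The iterated Dunkl operator `T^β = T_1^{β 1} ∘ ⋯ ∘ T_N^{β N}`. -/
def dunklTpow (N : ℕ) (R : Finset (EuclideanSpace ℝ (Fin N)))
    (k : EuclideanSpace ℝ (Fin N) → ℝ) (β : Fin N → ℕ)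
    (f : EuclideanSpace ℝ (Fin N) → ℂ) : EuclideanSpace ℝ (Fin N) → ℂ :=
  (List.finRange N).foldr (fun j g => (dunklT N R k j)^[β j] g) f

/-!
With `c x = 2 ⟪α, x⟫ / ‖α‖ ^ 2`, the difference quotient in the Dunkl operator is a multiple of
`(f x - f (σ_α x)) / c x = ∫₀¹ ∂_α f (x - t c(x) α) dt`, and this integral is smooth across the
hyperplane `c = 0` at the cost of one derivative of `f`. It inherits the decay of `f` for two
different reasons. Where `|c x| ≤ 1`, the segment of integration stays within distance `‖α‖` of `x`,
along which the weight is comparable to its value at `x`, and one differentiates under the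
integral. Where `|c x| ≥ 1`, the product of `c` and the quotient `g` is `f - f ∘ σ_α`, which decays
because the weight is invariant under reflections; dividing by `c` preserves decay, as one sees by
induction on the order of derivatives from `c • Dg = D(c • g) - g ⊗ c`.
-/

open Filter Asymptotics Topology Function

universe u

section ParametricIntegral

lemma exists_eventually_forall_norm_le_of_isCompact {X Y G : Type*} [TopologicalSpace X]
    [TopologicalSpace Y] [SeminormedAddCommGroup G] {f : X → Y → G} (hf : Continuous (uncurry f))
    {K : Set Y} (hK : IsCompact K) (x₀ : X) :
    ∃ B, ∀ᶠ x in 𝓝 x₀, ∀ y ∈ K, ‖f x y‖ ≤ B := by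
  obtain ⟨B, hB⟩ := hK.exists_bound_of_continuousOn (f := f x₀) (by fun_prop)
  refine ⟨B + 1, hK.eventually_forall_of_forall_eventually fun y hy ↦ ?_⟩
  have hlt : ‖uncurry f (x₀, y)‖ < B + 1 := (hB y hy).trans_lt (lt_add_one B)
  exact (hf.norm.continuousAt.eventually_lt continuousAt_const hlt).mono fun _ ↦ le_of_lt

-- A single universe, because induction on the order of derivatives replaces `F` by `E →L[ℝ] F`.
variable {E F : Type u} [NormedAddCommGroup E] [NormedSpace ℝ E] [NormedAddCommGroup F]
  [NormedSpace ℝ F] {f : E → ℝ → F}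

lemma contDiff_uncurry_fderiv {n : WithTop ℕ∞} (hf : ContDiff ℝ (n + 1) (uncurry f)) :
    ContDiff ℝ n (uncurry fun x t ↦ fderiv ℝ (f · t) x) :=
  ContDiff.fderiv (f := fun p : E × ℝ ↦ (f · p.2)) (g := Prod.fst)
    (hf.comp (contDiff_snd.prodMk (contDiff_snd.comp contDiff_fst))) contDiff_fst le_rfl

lemma hasFDerivAt_intervalIntegral_of_contDiff (hf : ContDiff ℝ 1 (uncurry f)) (a b : ℝ) (x : E) :
    HasFDerivAt (fun x ↦ ∫ t in a..b, f x t) (∫ t in a..b, fderiv ℝ (f · t) x) x := by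
  have hf' : Continuous (uncurry fun x t ↦ fderiv ℝ (f · t) x) :=
    (contDiff_uncurry_fderiv (n := 0) (by simpa using hf)).continuous
  obtain ⟨B, hB⟩ := exists_eventually_forall_norm_le_of_isCompact hf' isCompact_uIcc x
  refine intervalIntegral.hasFDerivAt_integral_of_dominated_of_fderiv_le
    (F' := fun y t ↦ fderiv ℝ (f · t) y) (bound := fun _ ↦ B) hB ?_ ?_ ?_ ?_ ?_ ?_
  · exact .of_forall fun y ↦ (hf.continuous.uncurry_left y).aestronglyMeasurable
  · exact (hf.continuous.uncurry_left x).intervalIntegrable a b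
  · exact (hf'.uncurry_left x).aestronglyMeasurable
  · exact .of_forall fun t ht y hy ↦ hy t (Set.uIoc_subset_uIcc ht)
  · exact intervalIntegrable_const
  · refine .of_forall fun t _ y _ ↦ DifferentiableAt.hasFDerivAt ?_
    exact (hf.comp (contDiff_id.prodMk contDiff_const)).differentiable one_ne_zero y

lemma fderiv_intervalIntegral_of_contDiff (hf : ContDiff ℝ 1 (uncurry f)) (a b : ℝ) :
    fderiv ℝ (fun x ↦ ∫ t in a..b, f x t) = fun x ↦ ∫ t in a..b, fderiv ℝ (f · t) x :=
  funext fun x ↦ (hasFDerivAt_intervalIntegral_of_contDiff hf a b x).fderiv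

lemma contDiff_intervalIntegral {n : ℕ} (hf : ContDiff ℝ n (uncurry f)) (a b : ℝ) :
    ContDiff ℝ n (fun x ↦ ∫ t in a..b, f x t) := by
  induction n generalizing F with
  | zero =>
    exact contDiff_zero.2
      (intervalIntegral.continuous_parametric_intervalIntegral_of_continuous' hf.continuous a b)
  | succ n ih =>
    have hf₁ : ContDiff ℝ 1 (uncurry f) := hf.of_le (by simp)
    push_cast at hf ⊢
    refine contDiff_succ_iff_fderiv.2
      ⟨fun x ↦ (hasFDerivAt_intervalIntegral_of_contDiff hf₁ a b x).differentiableAt, by simp, ?_⟩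
    rw [fderiv_intervalIntegral_of_contDiff hf₁]
    exact ih (contDiff_uncurry_fderiv hf)

lemma norm_iteratedFDeriv_intervalIntegral_le {n : ℕ} (hf : ContDiff ℝ n (uncurry f)) {a b : ℝ}
    {x : E} {C : ℝ} (hC : ∀ t ∈ Set.uIoc a b, ‖iteratedFDeriv ℝ n (f · t) x‖ ≤ C) :
    ‖iteratedFDeriv ℝ n (fun x ↦ ∫ t in a..b, f x t) x‖ ≤ C * |b - a| := by
  induction n generalizing F with
  | zero =>
    simp only [norm_iteratedFDeriv_zero] at hC ⊢
    exact intervalIntegral.norm_integral_le_of_norm_le_const hC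
  | succ n ih =>
    rw [← norm_iteratedFDeriv_fderiv,
      fderiv_intervalIntegral_of_contDiff (hf.of_le (by simp))]
    exact ih (contDiff_uncurry_fderiv hf) fun t ht ↦ norm_iteratedFDeriv_fderiv.trans_le (hC t ht)

end ParametricIntegral

lemma norm_iteratedFDeriv_comp_clm_le {E F G : Type*} [NormedAddCommGroup E] [NormedSpace ℝ E]
    [NormedAddCommGroup F] [NormedSpace ℝ F] [NormedAddCommGroup G] [NormedSpace ℝ G]
    (L : E →L[ℝ] G) {f : G → F} {i : ℕ} (hf : ContDiff ℝ i f) (x : E) :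
    ‖iteratedFDeriv ℝ i (fun x ↦ f (L x)) x‖ ≤ ‖L‖ ^ i * ‖iteratedFDeriv ℝ i f (L x)‖ := by
  change ‖iteratedFDeriv ℝ i (f ∘ L) x‖ ≤ _
  rw [L.iteratedFDeriv_comp_right hf x le_rfl, mul_comm]
  simpa using (iteratedFDeriv ℝ i f (L x)).norm_compContinuousLinearMap_le fun _ ↦ L

/-- `f` is of class `C^m` and along the filter `l` each of its derivatives of order at most `m` is
dominated by the weight `w`. Only the bounds are relative to `l`, not the regularity: taking for `l`
a principal filter gives bounds on a set, and `l = ⊤` gives bounds on the whole space. -/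
structure HasDecay {E F : Type*} [NormedAddCommGroup E] [NormedSpace ℝ E] [NormedAddCommGroup F]
    [NormedSpace ℝ F] (l : Filter E) (w : E → ℝ) (m : ℕ) (f : E → F) : Prop where
  contDiff : ContDiff ℝ m f
  isBigO_iteratedFDeriv : ∀ i ≤ m, iteratedFDeriv ℝ i f =O[l] w

namespace HasDecay

variable {E F G : Type*} [NormedAddCommGroup E] [NormedSpace ℝ E] [NormedAddCommGroup F]
  [NormedSpace ℝ F] [NormedAddCommGroup G] [NormedSpace ℝ G] {l l' : Filter E} {w : E → ℝ}
  {m n : ℕ} {f g : E → F}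

lemma of_le (hf : HasDecay l w n f) (hmn : m ≤ n) : HasDecay l w m f :=
  ⟨hf.contDiff.of_le (by exact_mod_cast hmn), fun i hi ↦ hf.isBigO_iteratedFDeriv i (hi.trans hmn)⟩

lemma mono (hf : HasDecay l' w m f) (hl : l ≤ l') : HasDecay l w m f :=
  ⟨hf.contDiff, fun i hi ↦ (hf.isBigO_iteratedFDeriv i hi).mono hl⟩

lemma sup (hf : HasDecay l w m f) (hf' : HasDecay l' w m f) : HasDecay (l ⊔ l') w m f :=
  ⟨hf.contDiff, fun i hi ↦ (hf.isBigO_iteratedFDeriv i hi).sup (hf'.isBigO_iteratedFDeriv i hi)⟩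

lemma isBigO (hf : HasDecay l w m f) : f =O[l] w :=
  IsBigO.of_norm_left <| (hf.isBigO_iteratedFDeriv 0 m.zero_le).norm_left.congr_left
    fun _ ↦ norm_iteratedFDeriv_zero

lemma fderiv_right (hf : HasDecay l w (m + 1) f) : HasDecay l w m (fderiv ℝ f) :=
  ⟨hf.contDiff.fderiv_right (by simp), fun i hi ↦ IsBigO.of_norm_left <|
    (hf.isBigO_iteratedFDeriv (i + 1) (by lia)).norm_left.congr_left
      fun _ ↦ norm_iteratedFDeriv_fderiv.symm⟩

lemma of_continuous (hf : Continuous f) (hfw : f =O[l] w) : HasDecay l w 0 f := by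
  refine ⟨contDiff_zero.2 hf, fun i hi ↦ IsBigO.of_norm_left ?_⟩
  obtain rfl := Nat.le_zero.1 hi
  exact hfw.norm_left.congr_left fun _ ↦ norm_iteratedFDeriv_zero.symm

lemma of_fderiv (hf : Differentiable ℝ f) (hfw : f =O[l] w)
    (hf' : HasDecay l w m (fderiv ℝ f)) : HasDecay l w (m + 1) f := by
  refine ⟨?_, fun i hi ↦ IsBigO.of_norm_left ?_⟩
  · push_cast
    exact contDiff_succ_iff_fderiv.2 ⟨hf, by simp, hf'.contDiff⟩
  · cases i with
    | zero => exact hfw.norm_left.congr_left fun _ ↦ norm_iteratedFDeriv_zero.symm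
    | succ i =>
      exact (hf'.isBigO_iteratedFDeriv i (by lia)).norm_left.congr_left
        fun _ ↦ norm_iteratedFDeriv_fderiv

lemma clm_comp (L : F →L[ℝ] G) (hf : HasDecay l w m f) : HasDecay l w m fun x ↦ L (f x) := by
  refine ⟨L.contDiff.comp hf.contDiff, fun i hi ↦ ?_⟩
  have hL : iteratedFDeriv ℝ i (L ∘ f) =O[l] iteratedFDeriv ℝ i f :=
    .of_bound ‖L‖ <| .of_forall fun x ↦
      L.norm_iteratedFDeriv_comp_left hf.contDiff.contDiffAt (by exact_mod_cast hi)
  exact hL.trans (hf.isBigO_iteratedFDeriv i hi)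

lemma sum {ι : Type*} {s : Finset ι} {f : ι → E → F} (hf : ∀ j ∈ s, HasDecay l w m (f j)) :
    HasDecay l w m fun x ↦ ∑ j ∈ s, f j x := by
  refine ⟨ContDiff.sum fun j hj ↦ (hf j hj).contDiff, fun i hi ↦ ?_⟩
  rw [iteratedFDeriv_sum fun j hj ↦ ((hf j hj).of_le hi).contDiff]
  exact IsBigO.sum fun j hj ↦ (hf j hj).isBigO_iteratedFDeriv i hi

lemma add (hf : HasDecay l w m f) (hg : HasDecay l w m g) : HasDecay l w m fun x ↦ f x + g x := by
  refine ⟨hf.contDiff.add hg.contDiff, fun i hi ↦ ?_⟩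
  change iteratedFDeriv ℝ i (f + g) =O[l] w
  rw [iteratedFDeriv_add (hf.of_le hi).contDiff (hg.of_le hi).contDiff]
  exact (hf.isBigO_iteratedFDeriv i hi).add (hg.isBigO_iteratedFDeriv i hi)

lemma sub (hf : HasDecay l w m f) (hg : HasDecay l w m g) : HasDecay l w m fun x ↦ f x - g x := by
  simpa [sub_eq_add_neg] using hf.add (hg.clm_comp (-.id ℝ F))

lemma comp_clm {w' : G → ℝ} {f : G → F} (hf : HasDecay ⊤ w' m f) (L : E →L[ℝ] G)
    (hw : (fun x ↦ w' (L x)) =O[l] w) : HasDecay l w m fun x ↦ f (L x) := by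
  refine ⟨hf.contDiff.comp L.contDiff, fun i hi ↦ ?_⟩
  have hL : iteratedFDeriv ℝ i (fun x ↦ f (L x)) =O[l] fun x ↦ iteratedFDeriv ℝ i f (L x) :=
    .of_bound (‖L‖ ^ i) <| .of_forall fun x ↦
      norm_iteratedFDeriv_comp_clm_le L (hf.of_le hi).contDiff x
  exact hL.trans <| ((hf.isBigO_iteratedFDeriv i hi).comp_tendsto tendsto_top).trans hw

end HasDecay

section Division

lemma isBigO_of_smul {X F : Type*} [NormedAddCommGroup F] [NormedSpace ℝ F] {l : Filter X}
    {w c : X → ℝ} (hc : ∀ᶠ x in l, 1 ≤ |c x|) {g : X → F} (hcg : (fun x ↦ c x • g x) =O[l] w) :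
    g =O[l] w := by
  refine IsBigO.trans (.of_bound' <| hc.mono fun x hx ↦ ?_) hcg
  rw [norm_smul]
  exact le_mul_of_one_le_left (norm_nonneg _) hx

variable {E F : Type u} [NormedAddCommGroup E] [NormedSpace ℝ E] [NormedAddCommGroup F]
  [NormedSpace ℝ F] {l : Filter E} {w : E → ℝ} {m : ℕ}

lemma HasDecay.of_smul {c : E →L[ℝ] ℝ} (hc : ∀ᶠ x in l, 1 ≤ |c x|) {g : E → F}
    (hg : ContDiff ℝ m g) (hcg : HasDecay l w m fun x ↦ c x • g x) : HasDecay l w m g := by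
  induction m generalizing F with
  | zero => exact .of_continuous hg.continuous (isBigO_of_smul hc hcg.isBigO)
  | succ m ih =>
    have hdiff : Differentiable ℝ g := hg.differentiable (by simp)
    have hg_decay : HasDecay l w m g := ih (hg.of_le (by simp)) (hcg.of_le m.le_succ)
    have hleibniz (x : E) : c x • fderiv ℝ g x =
        fderiv ℝ (fun x ↦ c x • g x) x - c.smulRightL ℝ E F (g x) := by
      rw [fderiv_fun_smul c.differentiableAt (hdiff x)]
      simp
    have hcg' : HasDecay l w m fun x ↦ c x • fderiv ℝ g x := by
      simpa only [hleibniz] using hcg.fderiv_right.sub (hg_decay.clm_comp _)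
    exact .of_fderiv hdiff hg_decay.isBigO (ih (hg.fderiv_right (by simp)) hcg')

lemma HasDecay.intervalIntegral_comp_clm {G : Type*} [NormedAddCommGroup G] [NormedSpace ℝ G]
    {w' : G → ℝ} {f : G → F} (hf : HasDecay ⊤ w' m f) {L : ℝ → E →L[ℝ] G} (hL : ContDiff ℝ m L)
    {a b K : ℝ} (hw : ∀ᶠ x in l, ∀ t ∈ Set.uIcc a b, ‖w' (L t x)‖ ≤ K * ‖w x‖) :
    HasDecay l w m fun x ↦ ∫ t in a..b, f (L t x) := by
  have hcomp : ContDiff ℝ m (uncurry fun x t ↦ f (L t x)) :=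
    hf.contDiff.comp ((hL.comp contDiff_snd).clm_apply contDiff_fst)
  refine ⟨contDiff_intervalIntegral hcomp a b, fun i hi ↦ ?_⟩
  obtain ⟨B, hB⟩ := isCompact_uIcc.exists_bound_of_continuousOn (s := Set.uIcc a b)
    hL.continuous.continuousOn
  obtain ⟨C, hC0, hC⟩ := (hf.isBigO_iteratedFDeriv i hi).exists_nonneg
  refine .of_bound (B ^ i * C * K * |b - a|) (hw.mono fun x hx ↦ ?_)
  have hbound : ∀ t ∈ Set.uIcc a b,
      ‖iteratedFDeriv ℝ i (fun x ↦ f (L t x)) x‖ ≤ B ^ i * (C * (K * ‖w x‖)) := fun t ht ↦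
    calc ‖iteratedFDeriv ℝ i (fun x ↦ f (L t x)) x‖
        ≤ ‖L t‖ ^ i * ‖iteratedFDeriv ℝ i f (L t x)‖ :=
          norm_iteratedFDeriv_comp_clm_le (L t) (hf.of_le hi).contDiff x
      _ ≤ B ^ i * (C * ‖w' (L t x)‖) := by
          have := (norm_nonneg _).trans (hB t ht)
          gcongr
          exacts [hB t ht, isBigOWith_top.1 hC _]
      _ ≤ B ^ i * (C * (K * ‖w x‖)) := by
          have := (norm_nonneg _).trans (hB t ht)
          gcongr
          exact hx t ht
  calc ‖iteratedFDeriv ℝ i (fun x ↦ ∫ t in a..b, f (L t x)) x‖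
      ≤ B ^ i * (C * (K * ‖w x‖)) * |b - a| :=
        norm_iteratedFDeriv_intervalIntegral_le (hcomp.of_le (by exact_mod_cast hi))
          fun t ht ↦ hbound t (Set.uIoc_subset_uIcc ht)
    _ = B ^ i * C * K * |b - a| * ‖w x‖ := by ring

end Division

/-- Weights whose values at points of bounded mutual distance are uniformly comparable. -/
def IsModerate {E : Type*} [SeminormedAddCommGroup E] (w : E → ℝ) : Prop :=
  ∀ r, ∃ K, ∀ x y, ‖x - y‖ ≤ r → ‖w x‖ ≤ K * ‖w y‖

lemma isModerate_one_add_norm_rpow {E : Type*} [SeminormedAddCommGroup E] (s : ℝ) :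
    IsModerate fun x : E ↦ (1 + ‖x‖) ^ s := by
  intro r
  have hcomp {x y : E} (hxy : ‖x - y‖ ≤ r) : 1 + ‖x‖ ≤ (1 + r) * (1 + ‖y‖) := by
    have hr : 0 ≤ r := (norm_nonneg _).trans hxy
    nlinarith [norm_sub_norm_le x y, norm_nonneg y]
  refine ⟨(1 + r) ^ |s|, fun x y hxy ↦ ?_⟩
  have hr : 0 ≤ r := (norm_nonneg _).trans hxy
  rw [Real.norm_of_nonneg (by positivity), Real.norm_of_nonneg (by positivity)]
  rcases le_total 0 s with hs | hs
  · rw [abs_of_nonneg hs, ← Real.mul_rpow (by positivity) (by positivity)]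
    exact Real.rpow_le_rpow (by positivity) (hcomp hxy) hs
  · rw [abs_of_nonpos hs, Real.rpow_neg (by positivity), ← Real.inv_rpow (by positivity),
      ← Real.mul_rpow (by positivity) (by positivity)]
    refine Real.rpow_le_rpow_of_nonpos (by positivity) ?_ hs
    rw [inv_mul_le_iff₀ (by positivity)]
    exact hcomp (norm_sub_rev x y ▸ hxy)

section HadamardQuotient

variable {E F : Type u} [NormedAddCommGroup E] [NormedSpace ℝ E] [NormedAddCommGroup F]
  [NormedSpace ℝ F]

/-- The map `x ↦ x - (t * c x) • α`, running from the identity at `t = 0` to the reflection with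
functional `c` and vector `α` at `t = 1`; it is defined without assuming `c α = 2`. -/
def partialReflection (c : E →L[ℝ] ℝ) (α : E) (t : ℝ) : E →L[ℝ] E :=
  .id ℝ E - t • c.smulRight α

/-- The quotient of `f x - f (x - c x • α)` by `c x`, in the integral form given by Hadamard's
lemma, which makes sense also on the hyperplane `c x = 0`. -/
def hadamardQuotient (c : E →L[ℝ] ℝ) (α : E) (f : E → F) (x : E) : F :=
  ∫ t in (0 : ℝ)..1, fderiv ℝ f (partialReflection c α t x) α

lemma partialReflection_apply (c : E →L[ℝ] ℝ) (α : E) (t : ℝ) (x : E) :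
    partialReflection c α t x = x - (t * c x) • α := by
  simp [partialReflection, mul_smul]

lemma smul_hadamardQuotient [CompleteSpace F] (c : E →L[ℝ] ℝ) (α : E) {f : E → F}
    (hf : ContDiff ℝ 1 f) (x : E) :
    c x • hadamardQuotient c α f x = f x - f (x - c x • α) := by
  simp only [hadamardQuotient, partialReflection_apply]
  have hderiv (t : ℝ) : HasDerivAt (fun t ↦ f (x - (t * c x) • α))
      (-(c x • fderiv ℝ f (x - (t * c x) • α) α)) t := by
    have hpath : HasDerivAt (fun t ↦ x - (t * c x) • α) (-(c x • α)) t := by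
      simpa using (((hasDerivAt_id t).mul_const (c x)).smul_const α).const_sub x
    rw [← map_smul, ← map_neg]
    exact (hf.differentiable one_ne_zero _).hasFDerivAt.comp_hasDerivAt t hpath
  have hcont : Continuous fun t : ℝ ↦ -(c x • fderiv ℝ f (x - (t * c x) • α) α) :=
    ((((hf.continuous_fderiv one_ne_zero).comp (by fun_prop)).clm_apply
      continuous_const).const_smul _).neg
  have hftc := intervalIntegral.integral_eq_sub_of_hasDerivAt (fun t _ ↦ hderiv t)
    (hcont.intervalIntegrable 0 1)
  rw [intervalIntegral.integral_neg, intervalIntegral.integral_smul] at hftc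
  rw [← neg_inj, hftc]
  simp

lemma hasDecay_hadamardQuotient_near {w : E → ℝ} {m : ℕ} {f : E → F} (hf : HasDecay ⊤ w (m + 1) f)
    (hw : IsModerate w) (c : E →L[ℝ] ℝ) (α : E) :
    HasDecay (𝓟 {x | |c x| ≤ 1}) w m (hadamardQuotient c α f) := by
  obtain ⟨K, hK⟩ := hw ‖α‖
  have hderiv : HasDecay ⊤ w m fun x ↦ fderiv ℝ f x α :=
    hf.fderiv_right.clm_comp (ContinuousLinearMap.apply ℝ F α)
  have hpath : ContDiff ℝ m (partialReflection c α) :=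
    contDiff_const.sub (contDiff_id.smul contDiff_const)
  refine hderiv.intervalIntegral_comp_clm hpath (K := K)
    (eventually_principal.2 fun x hx t ht ↦ hK _ _ ?_)
  rw [Set.uIcc_of_le zero_le_one] at ht
  rw [partialReflection_apply, sub_sub_cancel_left, norm_neg, norm_smul, norm_mul,
    Real.norm_of_nonneg ht.1]
  exact mul_le_of_le_one_left (norm_nonneg α) (mul_le_one₀ ht.2 (abs_nonneg _) hx)

lemma hasDecay_hadamardQuotient [CompleteSpace F] {w : E → ℝ} {m : ℕ} {f : E → F}
    (hf : HasDecay ⊤ w (m + 1) f) (hw : IsModerate w) {c : E →L[ℝ] ℝ} {α : E}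
    (hrefl : (fun x ↦ w (x - c x • α)) =O[⊤] w) :
    HasDecay ⊤ w m (hadamardQuotient c α f) := by
  have near := hasDecay_hadamardQuotient_near hf hw c α
  have far : HasDecay (𝓟 {x | 1 ≤ |c x|}) w m (hadamardQuotient c α f) := by
    refine .of_smul (eventually_principal.2 fun x hx ↦ hx) near.contDiff ?_
    simp only [smul_hadamardQuotient c α (hf.contDiff.of_le (by simp))]
    have hfm := hf.of_le m.le_succ
    have hfrefl : HasDecay ⊤ w m fun x ↦ f (x - c x • α) := by
      simpa only [partialReflection_apply, one_mul] using
        hfm.comp_clm (partialReflection c α 1) (w := w)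
          (by simpa only [partialReflection_apply, one_mul])
    exact (hfm.sub hfrefl).mono le_top
  have hcover : {x | |c x| ≤ 1} ∪ {x | 1 ≤ |c x|} = Set.univ :=
    Set.eq_univ_of_forall fun x ↦ le_total |c x| 1
  simpa [hcover] using near.sup far

end HadamardQuotient

section Dunkl

variable {N : ℕ} {R : Finset (EuclideanSpace ℝ (Fin N))} {k : EuclideanSpace ℝ (Fin N) → ℝ}
  {w : EuclideanSpace ℝ (Fin N) → ℝ} {m : ℕ} {f g : EuclideanSpace ℝ (Fin N) → ℂ}

/-- The functional `x ↦ 2 ⟪α, x⟫ / ‖α‖ ^ 2` of the reflection `σ_α`. -/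
def coroot (α : EuclideanSpace ℝ (Fin N)) : EuclideanSpace ℝ (Fin N) →L[ℝ] ℝ :=
  (2 / ‖α‖ ^ 2) • innerSL ℝ α

/-- The regular set `Ω`, the complement of the reflecting hyperplanes. -/
def dunklRegular (R : Finset (EuclideanSpace ℝ (Fin N))) : Set (EuclideanSpace ℝ (Fin N)) :=
  {x | ∀ α ∈ R, ⟪α, x⟫ ≠ 0}

/-- The Dunkl operator with its difference quotients replaced by Hadamard quotients: it agrees with
`dunklT` on the regular set and maps `C^(m+1)` functions on the whole space to `C^m` functions. -/
def smoothDunklT (R : Finset (EuclideanSpace ℝ (Fin N))) (k : EuclideanSpace ℝ (Fin N) → ℝ)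
    (j : Fin N) (f : EuclideanSpace ℝ (Fin N) → ℂ) (x : EuclideanSpace ℝ (Fin N)) : ℂ :=
  fderiv ℝ f x (EuclideanSpace.single j 1) +
    ∑ α ∈ R, (k α * α j / ‖α‖ ^ 2) • hadamardQuotient (coroot α) α f x

lemma coroot_apply (α x : EuclideanSpace ℝ (Fin N)) : coroot α x = 2 * ⟪α, x⟫ / ‖α‖ ^ 2 := by
  simp [coroot, mul_div_right_comm]

lemma dunklReflect_eq (α x : EuclideanSpace ℝ (Fin N)) :
    dunklReflect α x = x - coroot α x • α := by
  rw [coroot_apply, real_inner_comm, dunklReflect]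

lemma inner_dunklReflect_right (α x y : EuclideanSpace ℝ (Fin N)) :
    ⟪x, dunklReflect α y⟫ = ⟪dunklReflect α x, y⟫ := by
  simp only [dunklReflect, inner_sub_left, inner_sub_right, real_inner_smul_left,
    real_inner_smul_right, real_inner_comm α y]
  ring

lemma norm_dunklReflect (α x : EuclideanSpace ℝ (Fin N)) : ‖dunklReflect α x‖ = ‖x‖ := by
  have : dunklReflect α x = (ℝ ∙ α)ᗮ.reflection x := by
    rw [Submodule.reflection_orthogonal_apply, Submodule.reflection_singleton_apply,
      dunklReflect_eq, coroot_apply]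
    simp [two_smul, ← add_div, two_mul, ← add_smul]
  rw [this, LinearIsometryEquiv.norm_map]

lemma isOpen_dunklRegular (R : Finset (EuclideanSpace ℝ (Fin N))) : IsOpen (dunklRegular R) := by
  simp only [dunklRegular, Set.ofPred_forall]
  exact isOpen_biInter_finset fun α _ ↦ isOpen_ne_fun (by fun_prop) continuous_const

lemma dunklReflect_mem_dunklRegular (hR : ∀ α ∈ R, ∀ β ∈ R, dunklReflect α β ∈ R)
    {α x : EuclideanSpace ℝ (Fin N)} (hα : α ∈ R) (hx : x ∈ dunklRegular R) :
    dunklReflect α x ∈ dunklRegular R := fun β hβ ↦ by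
  rw [inner_dunklReflect_right]
  exact hx _ (hR α hα β hβ)

lemma eqOn_dunklT (hR : ∀ α ∈ R, ∀ β ∈ R, dunklReflect α β ∈ R)
    (hfg : Set.EqOn f g (dunklRegular R)) (j : Fin N) :
    Set.EqOn (dunklT N R k j f) (dunklT N R k j g) (dunklRegular R) := fun x hx ↦ by
  have hev : f =ᶠ[𝓝 x] g := hfg.eventuallyEq_of_mem ((isOpen_dunklRegular R).mem_nhds hx)
  rw [dunklT, dunklT, hev.fderiv_eq, hfg hx]
  congr 1
  exact Finset.sum_congr rfl fun α hα ↦ by rw [hfg (dunklReflect_mem_dunklRegular hR hα hx)]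

lemma eqOn_dunklT_smoothDunklT (hf : ContDiff ℝ 1 f) (j : Fin N) :
    Set.EqOn (dunklT N R k j f) (smoothDunklT R k j f) (dunklRegular R) := fun x hx ↦ by
  rw [dunklT, smoothDunklT]
  congr 1
  refine Finset.sum_congr rfl fun α hα ↦ ?_
  have hαx : ⟪α, x⟫ ≠ 0 := hx α hα
  have hα0 : ‖α‖ ≠ 0 := norm_ne_zero_iff.2 fun h ↦ hαx (by rw [h, inner_zero_left])
  rw [dunklReflect_eq, ← smul_hadamardQuotient _ _ hf, coroot_apply, Complex.real_smul,
    Complex.real_smul]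
  have hαx' : ((⟪α, x⟫ : ℝ) : ℂ) ≠ 0 := Complex.ofReal_ne_zero.2 hαx
  have hα0' : (‖α‖ : ℂ) ≠ 0 := Complex.ofReal_ne_zero.2 hα0
  push_cast
  field_simp

lemma hasDecay_smoothDunklT (hw : IsModerate w)
    (hwR : ∀ α ∈ R, ∀ x, w (dunklReflect α x) = w x) (hf : HasDecay ⊤ w (m + 1) f) (j : Fin N) :
    HasDecay ⊤ w m (smoothDunklT R k j f) := by
  refine (hf.fderiv_right.clm_comp (ContinuousLinearMap.apply ℝ ℂ _)).add (.sum fun α hα ↦ ?_)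
  have hquot : HasDecay ⊤ w m (hadamardQuotient (coroot α) α f) :=
    hasDecay_hadamardQuotient hf hw <| by
      simpa only [← dunklReflect_eq, hwR α hα] using isBigO_refl w ⊤
  exact hquot.clm_comp ((k α * α j / ‖α‖ ^ 2) • .id ℝ ℂ)

/-- `F` agrees on the regular set with a function on the whole space that has decay `w`. This is the
property that Dunkl operators propagate, since `dunklT` takes junk values on the hyperplanes. -/
def DecaysOnRegular (R : Finset (EuclideanSpace ℝ (Fin N))) (w : EuclideanSpace ℝ (Fin N) → ℝ)
    (m : ℕ) (F : EuclideanSpace ℝ (Fin N) → ℂ) : Prop :=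
  ∃ g, HasDecay ⊤ w m g ∧ Set.EqOn F g (dunklRegular R)

lemma DecaysOnRegular.dunklT (hR : ∀ α ∈ R, ∀ β ∈ R, dunklReflect α β ∈ R) (hw : IsModerate w)
    (hwR : ∀ α ∈ R, ∀ x, w (dunklReflect α x) = w x) (hf : DecaysOnRegular R w (m + 1) f)
    (j : Fin N) : DecaysOnRegular R w m (dunklT N R k j f) := by
  obtain ⟨g, hg, hfg⟩ := hf
  exact ⟨smoothDunklT R k j g, hasDecay_smoothDunklT hw hwR hg j,
    (eqOn_dunklT hR hfg j).trans (eqOn_dunklT_smoothDunklT (hg.contDiff.of_le (by simp)) j)⟩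

end Dunkl

section MultiIndex

lemma iterate_of_step {X : Type*} {P : ℕ → X → Prop} {T : X → X}
    (hT : ∀ m x, P (m + 1) x → P m (T x)) {m n : ℕ} {x : X} (hx : P (m + n) x) :
    P m (T^[n] x) := by
  induction n generalizing x with
  | zero => exact hx
  | succ n ih => exact ih (hT _ _ hx)

lemma foldr_iterate_of_step {ι X : Type*} {P : ℕ → X → Prop} {T : ι → X → X}
    (hT : ∀ j m x, P (m + 1) x → P m (T j x)) (L : List ι) (β : ι → ℕ) {m : ℕ} {x : X}
    (hx : P (m + (L.map β).sum) x) : P m (L.foldr (fun j g ↦ (T j)^[β j] g) x) := by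
  induction L generalizing m with
  | nil => exact hx
  | cons j L ih =>
    rw [List.map_cons, List.sum_cons, ← add_assoc] at hx
    exact iterate_of_step (hT j) (ih hx)

variable {N : ℕ} {f : EuclideanSpace ℝ (Fin N) → ℂ} {i j : Fin N} {β : Fin N → ℕ} {n : ℕ}

lemma contDiff_pderivE (j : Fin N) (hf : ContDiff ℝ (n + 1 : ℕ) f) :
    ContDiff ℝ n (pderivE j f) :=
  (hf.fderiv_right (by simp)).clm_apply contDiff_const

lemma pderivE_comm (hf : ContDiff ℝ 2 f) (i j : Fin N) :
    pderivE i (pderivE j f) = pderivE j (pderivE i f) := by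
  have hdiff : Differentiable ℝ (fderiv ℝ f) :=
    (hf.fderiv_right (m := 1) one_add_one_eq_two.le).differentiable one_ne_zero
  have hsnd (i j : Fin N) (x : EuclideanSpace ℝ (Fin N)) : pderivE i (pderivE j f) x =
      fderiv ℝ (fderiv ℝ f) x (EuclideanSpace.single i 1) (EuclideanSpace.single j 1) := by
    unfold pderivE
    rw [fderiv_clm_apply (hdiff x) (differentiableAt_const _)]
    simp
  funext x
  rw [hsnd, hsnd]
  exact (hf.contDiffAt.isSymmSndFDerivAt (by simp)).eq _ _

lemma pderivE_iterate_comm (hf : ContDiff ℝ (n + 1 : ℕ) f) (i j : Fin N) :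
    pderivE i ((pderivE j)^[n] f) = (pderivE j)^[n] (pderivE i f) := by
  induction n generalizing f with
  | zero => rfl
  | succ n ih =>
    rw [iterate_succ_apply, iterate_succ_apply, ih (contDiff_pderivE j hf),
      pderivE_comm (hf.of_le (by exact_mod_cast (by lia : 2 ≤ n + 1 + 1)))]

lemma contDiff_foldr_pderivE {L : List (Fin N)} (hf : ContDiff ℝ (n + (L.map β).sum : ℕ) f) :
    ContDiff ℝ n (L.foldr (fun j g ↦ (pderivE j)^[β j] g) f) :=
  foldr_iterate_of_step (P := fun m f ↦ ContDiff ℝ (m : ℕ) f)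
    (fun j _ _ hf ↦ contDiff_pderivE j hf) L β hf

lemma pderivE_foldr {L : List (Fin N)} (hL : L.Nodup) (hi : i ∈ L)
    (hf : ContDiff ℝ ((L.map β).sum + 1 : ℕ) f) :
    pderivE i (L.foldr (fun j g ↦ (pderivE j)^[β j] g) f) =
      L.foldr (fun j g ↦ (pderivE j)^[(β + Pi.single i 1 : Fin N → ℕ) j] g) f := by
  induction L with
  | nil => simp at hi
  | cons j L ih =>
    obtain ⟨hjL, hL⟩ := List.nodup_cons.1 hL
    rw [List.map_cons, List.sum_cons] at hf
    simp only [List.foldr_cons]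
    rcases eq_or_ne i j with rfl | hij
    · rw [← iterate_succ_apply' (pderivE i), Pi.add_apply, Pi.single_eq_same]
      congr 1
      refine List.foldr_ext _ _ _ fun a ha g ↦ ?_
      have hai : a ≠ i := fun h ↦ hjL (h ▸ ha)
      simp [Pi.single_eq_of_ne hai]
    · have hsmooth : ContDiff ℝ (β j + 1 : ℕ) (L.foldr (fun j g ↦ (pderivE j)^[β j] g) f) :=
        contDiff_foldr_pderivE (hf.of_le (by exact_mod_cast by lia))
      rw [pderivE_iterate_comm hsmooth, Pi.add_apply, Pi.single_eq_of_ne hij.symm, add_zero,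
        ih hL (List.mem_of_ne_of_mem hij hi) (hf.of_le (by exact_mod_cast by lia))]

lemma pderivE_mderivE (hf : ContDiff ℝ ((∑ j, β j) + 1 : ℕ) f) (i : Fin N) :
    pderivE i (mderivE β f) = mderivE (β + Pi.single i 1) f :=
  pderivE_foldr (List.nodup_finRange N) (List.mem_finRange i) (by rwa [← Fin.sum_univ_def])

lemma contDiff_mderivE (hf : ContDiff ℝ (n + ∑ j, β j : ℕ) f) : ContDiff ℝ n (mderivE β f) :=
  contDiff_foldr_pderivE (by rwa [← Fin.sum_univ_def])

lemma mderivE_zero (f : EuclideanSpace ℝ (Fin N) → ℂ) : mderivE 0 f = f := by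
  simp [mderivE]

end MultiIndex

section MultiIndexDecay

variable {N : ℕ} {l : Filter (EuclideanSpace ℝ (Fin N))} {w : EuclideanSpace ℝ (Fin N) → ℝ}
  {f : EuclideanSpace ℝ (Fin N) → ℂ}

lemma fderiv_eq_sum_pderivE (f : EuclideanSpace ℝ (Fin N) → ℂ) (x : EuclideanSpace ℝ (Fin N)) :
    fderiv ℝ f x = ∑ j, (EuclideanSpace.proj j).smulRight (pderivE j f x) := by
  refine ContinuousLinearMap.coe_injective <|
    (EuclideanSpace.basisFun (Fin N) ℝ).toBasis.ext fun i ↦ ?_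
  simp [pderivE, apply_ite Complex.ofReal]

lemma HasDecay.of_pderivE {m : ℕ} (hf : Differentiable ℝ f) (hfw : f =O[l] w)
    (hf' : ∀ j, HasDecay l w m (pderivE j f)) : HasDecay l w (m + 1) f := by
  refine .of_fderiv hf hfw ?_
  rw [funext (fderiv_eq_sum_pderivE f)]
  exact .sum fun j _ ↦ (hf' j).clm_comp
    (ContinuousLinearMap.smulRightL ℝ _ ℂ (EuclideanSpace.proj j))

lemma hasDecay_mderivE {n : ℕ} (hf : ContDiff ℝ n f)
    (hfw : ∀ β : Fin N → ℕ, ∑ j, β j ≤ n → mderivE β f =O[l] w) {m : ℕ} {β : Fin N → ℕ}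
    (hβ : m + ∑ j, β j ≤ n) : HasDecay l w m (mderivE β f) := by
  have hsmooth : ContDiff ℝ m (mderivE β f) :=
    contDiff_mderivE (hf.of_le (by exact_mod_cast hβ))
  induction m generalizing β with
  | zero => exact .of_continuous hsmooth.continuous (hfw β (by lia))
  | succ m ih =>
    refine .of_pderivE (hsmooth.differentiable (by simp)) (hfw β (by lia)) fun j ↦ ?_
    rw [pderivE_mderivE (hf.of_le (by exact_mod_cast by lia))]
    have hsum : m + ∑ i, (β + Pi.single j 1 : Fin N → ℕ) i ≤ n := by
      simp only [Pi.add_apply, Finset.sum_add_distrib, Finset.sum_pi_single', Finset.mem_univ,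
        if_true]
      lia
    exact ih hsum (contDiff_mderivE (hf.of_le (by exact_mod_cast hsum)))

lemma hasDecay_of_isBigO_mderivE {n : ℕ} (hf : ContDiff ℝ n f)
    (hfw : ∀ β : Fin N → ℕ, ∑ j, β j ≤ n → mderivE β f =O[l] w) : HasDecay l w n f := by
  simpa [mderivE_zero] using hasDecay_mderivE hf hfw (m := n) (β := 0) (by simp)

end MultiIndexDecay

lemma finite_setOf_sum_le (ι : Type*) [Fintype ι] (n : ℕ) : {β : ι → ℕ | ∑ j, β j ≤ n}.Finite :=
  (Set.Finite.pi' fun _ ↦ Set.finite_Iic n).subset fun _ hβ j ↦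
    (Finset.single_le_sum (fun _ _ ↦ Nat.zero_le _) (Finset.mem_univ j)).trans hβ

lemma decaysOnRegular_dunklTpow {N : ℕ} {R : Finset (EuclideanSpace ℝ (Fin N))}
    {w : EuclideanSpace ℝ (Fin N) → ℝ} {f : EuclideanSpace ℝ (Fin N) → ℂ} {m : ℕ}
    (hR : ∀ α ∈ R, ∀ β ∈ R, dunklReflect α β ∈ R) (hw : IsModerate w)
    (hwR : ∀ α ∈ R, ∀ x, w (dunklReflect α x) = w x) (k : EuclideanSpace ℝ (Fin N) → ℝ)
    {β : Fin N → ℕ} (hf : HasDecay ⊤ w (m + ∑ j, β j) f) :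
    DecaysOnRegular R w m (dunklTpow N R k β f) :=
  foldr_iterate_of_step (fun j _ _ hf ↦ hf.dunklT hR hw hwR j) _ β
    ⟨f, by rwa [← Fin.sum_univ_def], Set.eqOn_refl _ _⟩

lemma DecaysOnRegular.eventually_norm_le {N : ℕ} {R : Finset (EuclideanSpace ℝ (Fin N))}
    {w : EuclideanSpace ℝ (Fin N) → ℝ} {m : ℕ} {F : EuclideanSpace ℝ (Fin N) → ℂ}
    (hF : DecaysOnRegular R w m F) :
    ∀ᶠ C in atTop, ∀ x ∈ dunklRegular R, ‖F x‖ ≤ C * ‖w x‖ := by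
  obtain ⟨g, hg, hFg⟩ := hF
  obtain ⟨C₀, hC₀⟩ := hg.isBigO.bound
  filter_upwards [eventually_ge_atTop C₀] with C hC x hx
  rw [hFg hx]
  exact (eventually_top.1 hC₀ x).trans (by gcongr)

theorem dunklTpow_decay_general {N : ℕ} {R : Finset (EuclideanSpace ℝ (Fin N))}
    (hR : ∀ α ∈ R, ∀ β ∈ R, dunklReflect α β ∈ R) (k : EuclideanSpace ℝ (Fin N) → ℝ)
    {w : EuclideanSpace ℝ (Fin N) → ℝ} (hw : IsModerate w)
    (hwR : ∀ α ∈ R, ∀ x, w (dunklReflect α x) = w x) {ℓ : ℕ} {φ : EuclideanSpace ℝ (Fin N) → ℂ}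
    (hφ : ContDiff ℝ ℓ φ)
    (hbound : ∀ β : Fin N → ℕ, ∑ j, β j ≤ ℓ → ∀ x, ‖mderivE β φ x‖ ≤ w x) :
    ∃ C > 0, ∀ β : Fin N → ℕ, ∑ j, β j ≤ ℓ → ∀ x ∈ dunklRegular R,
      ‖dunklTpow N R k β φ x‖ ≤ C * w x := by
  have hw0 (x) : 0 ≤ w x := (norm_nonneg _).trans (hbound 0 (by simp) x)
  have hdecay : HasDecay ⊤ w ℓ φ := hasDecay_of_isBigO_mderivE hφ fun β hβ ↦
    .of_bound' <| .of_forall fun x ↦ (hbound β hβ x).trans (Real.le_norm_self _)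
  have hpow : ∀ β ∈ {β : Fin N → ℕ | ∑ j, β j ≤ ℓ}, ∀ᶠ C in atTop, ∀ x ∈ dunklRegular R,
      ‖dunklTpow N R k β φ x‖ ≤ C * w x := fun β hβ ↦ by
    have hβ' := decaysOnRegular_dunklTpow (m := 0) hR hw hwR k (hdecay.of_le (by simpa using hβ))
    simpa only [Real.norm_of_nonneg (hw0 _)] using hβ'.eventually_norm_le
  obtain ⟨C, hC0, hC⟩ := ((eventually_gt_atTop 0).and
    ((finite_setOf_sum_le (Fin N) ℓ).eventually_all.2 hpow)).exists
  exact ⟨C, hC0, hC⟩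

theorem dunklTpow_decay
    (N : ℕ) (hN : 1 ≤ N)
    (R : Finset (EuclideanSpace ℝ (Fin N)))
    (k : EuclideanSpace ℝ (Fin N) → ℝ)
    (hR0 : (0 : EuclideanSpace ℝ (Fin N)) ∉ R)
    (hRnorm : ∀ α ∈ R, ‖α‖ = Real.sqrt 2)
    (hRrefl : ∀ α ∈ R, ∀ β ∈ R, dunklReflect α β ∈ R)
    (hk0 : ∀ α ∈ R, 0 ≤ k α)
    (hkinv : ∀ α ∈ R, ∀ β ∈ R, k (dunklReflect α β) = k β)
    (M : ℝ) (hM : 0 ≤ M) (ℓ : ℕ) (hℓ : 1 ≤ ℓ)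
    (φ : EuclideanSpace ℝ (Fin N) → ℂ) (hφ : ContDiff ℝ (ℓ : ℕ∞) φ)
    (hbound : ∀ β : Fin N → ℕ, (∑ j, β j) ≤ ℓ → ∀ x,
      ‖mderivE β φ x‖ ≤ (1 + ‖x‖) ^ (-(homDim N R k) - M)) :
    ∃ C : ℝ, 0 < C ∧ ∀ β : Fin N → ℕ, (∑ j, β j) ≤ ℓ →
      ∀ x : EuclideanSpace ℝ (Fin N), (∀ α ∈ R, ⟪α, x⟫ ≠ 0) →
        ‖dunklTpow N R k β φ x‖ ≤ C * (1 + ‖x‖) ^ (-(homDim N R k) - M) := by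
  exact dunklTpow_decay_general hRrefl k (isModerate_one_add_norm_rpow _)
    (fun α _ x ↦ by rw [norm_dunklReflect]) (by exact_mod_cast hφ) hbound
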